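/- arXiv:math/0403339 — 2 statements merged into one kernel-verified Lean document; each statement's English description precedes it below -/
import Mathlib

section
/- Let G be a finite simple graph with n ≥ 1 vertices. Set r = n + 1, x_j = exp(2πij/n) for j = 1, …, n, and t = 0. Then the state sum Σ_{f : E → Fin (n+1)} Π_{v ∈ V} w_v(f) equals n · N_{[n]}(G), i.e., n times the number of Hamiltonian cycles of G. Here w_v(f) = x_j if the multiset of colors of the edges incident to v consists of exactly two copies of some color j with 1 ≤ j ≤ n together with deg(v)−2 copies of color n+1, and w_v(f) = 0 otherwise (in particular w_v(f) = 0 if all edges incident to v have color n+1 or if v is isolated, since t = 0). -/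
open scoped Classical

/-- The finset of edges of `G` incident to the vertex `v`. -/
noncomputable def incidentEdges {V : Type*} [Fintype V] [DecidableEq V]
    (G : SimpleGraph V) (v : V) : Finset G.edgeSet :=
  Finset.univ.filter (fun e => v ∈ (e : Sym2 V))

/-- The local weight `w_v(f)`: colors are the elements of `Fin (m+1)`, the last color
playing the role of the color `r = m+1`.  The weight is `t` if every edge incident to `v`
has the last color (in particular if `v` is isolated), `x i` if the multiset of colors of
the edges incident to `v` consists of exactly two copies of the color `i` (with
`i ∈ {1, …, r-1}`) together with `deg v - 2` copies of the last color, and `0` otherwise. -/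
noncomputable def localWeight {V : Type*} [Fintype V] [DecidableEq V]
    (G : SimpleGraph V) {m : ℕ} (t : ℂ) (x : Fin m → ℂ)
    (f : G.edgeSet → Fin (m + 1)) (v : V) : ℂ :=
  if ∀ e ∈ incidentEdges G v, f e = Fin.last m then t
  else ∑ i : Fin m,
    if ((incidentEdges G v).filter (fun e => f e = i.castSucc)).card = 2 ∧
        (∀ e ∈ incidentEdges G v, f e = i.castSucc ∨ f e = Fin.last m)
    then x i else 0

/-- A (multi)cycle in `G`: a set of edges such that every vertex incident to an edge of
the set is incident to exactly two edges of the set.  It need not be connected. -/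
def IsMultiCycle {V : Type*} [Fintype V] [DecidableEq V]
    (G : SimpleGraph V) (C : Finset G.edgeSet) : Prop :=
  ∀ v : V, (∃ e ∈ C, v ∈ (e : Sym2 V)) →
    (C.filter (fun e => v ∈ (e : Sym2 V))).card = 2

/-- The graph on `V` whose edges are the edges of `C`. -/
def cycleGraph {V : Type*} [Fintype V] [DecidableEq V]
    (G : SimpleGraph V) (C : Finset G.edgeSet) : SimpleGraph V :=
  SimpleGraph.fromEdgeSet (↑(C.image (fun e => (e : Sym2 V))))

def condW {V : Type*} [Fintype V] [DecidableEq V]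
    (G : SimpleGraph V) {m : ℕ} (f : G.edgeSet → Fin (m + 1)) (v : V) (i : Fin m) : Prop :=
  ((incidentEdges G v).filter (fun e => f e = i.castSucc)).card = 2 ∧
        (∀ e ∈ incidentEdges G v, f e = i.castSucc ∨ f e = Fin.last m)

def RegC {V : Type*} [Fintype V] [DecidableEq V]
    (G : SimpleGraph V) (C : Finset G.edgeSet) : Prop :=
  ∀ v : V, (C.filter (fun e : G.edgeSet => v ∈ (e : Sym2 V))).card = 2

def CompatC {V : Type*} [Fintype V] [DecidableEq V]
    (G : SimpleGraph V) {m : ℕ} (C : Finset G.edgeSet) (g : V → Fin m) : Prop :=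
  ∀ e : G.edgeSet, e ∈ C → ∀ u ∈ (e : Sym2 V), ∀ v ∈ (e : Sym2 V), g u = g v

theorem localWeight_zero {V : Type*} [Fintype V] [DecidableEq V]
    (G : SimpleGraph V) {m : ℕ} (x : Fin m → ℂ)
    (f : G.edgeSet → Fin (m + 1)) (v : V) :
    localWeight G 0 x f v = ∑ i : Fin m, if condW G f v i then x i else 0 := by
  unfold localWeight
  split_ifs with h
  · symm
    apply Finset.sum_eq_zero
    intro i _
    rw [if_neg]
    rintro ⟨h2, -⟩
    have : (incidentEdges G v).filter (fun e => f e = i.castSucc) = ∅ := by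
      apply Finset.filter_eq_empty_iff.2
      intro e he h3
      rw [h e he] at h3
      exact (Fin.castSucc_ne_last i) h3.symm
    rw [this] at h2
    simp at h2
  · refine Finset.sum_congr rfl fun i _ => ?_
    unfold condW
    congr

theorem card_cond {V : Type*} [Fintype V] [DecidableEq V]
    (G : SimpleGraph V) {m : ℕ} (g : V → Fin m) :
    (Finset.univ.filter (fun f : G.edgeSet → Fin (m + 1) => ∀ v, condW G f v (g v))).card =
    (Finset.univ.filter (fun C : Finset G.edgeSet => RegC G C ∧ CompatC G C g)).card := by
  have key : ∀ f : G.edgeSet → Fin (m + 1), (∀ v, condW G f v (g v)) →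
      ∀ e : G.edgeSet, ∀ v ∈ (e : Sym2 V), f e ≠ Fin.last m → f e = (g v).castSucc := by
    intro f hf e v hv hne
    rcases (hf v).2 e (by simp [incidentEdges, hv]) with h | h
    · exact h
    · exact absurd h hne
  refine Finset.card_bij'
    (fun f _ => Finset.univ.filter (fun e => f e ≠ Fin.last m))
    (fun C _ => fun e => if e ∈ C then (g (Quot.out (e : Sym2 V)).1).castSucc else Fin.last m)
    ?_ ?_ ?_ ?_
  · intro f hf
    simp only [Finset.mem_filter, Finset.mem_univ, true_and] at hf ⊢
    refine ⟨fun v => ?_, ?_⟩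
    · rw [← (hf v).1]
      congr 1
      ext e
      simp only [Finset.mem_filter, Finset.mem_univ, true_and, incidentEdges]
      constructor
      · rintro ⟨a, b⟩
        exact ⟨b, key f hf e v b a⟩
      · rintro ⟨a, b⟩
        exact ⟨by rw [b]; exact Fin.castSucc_ne_last _, a⟩
    · intro e he u hu v hv
      simp only [Finset.mem_filter, Finset.mem_univ, true_and] at he
      exact Fin.castSucc_injective _ ((key f hf e u hu he).symm.trans (key f hf e v hv he))
  · intro C hC
    simp only [Finset.mem_filter, Finset.mem_univ, true_and] at hC ⊢
    obtain ⟨hR, hK⟩ := hC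
    have h0 : ∀ e : G.edgeSet, e ∈ C → ∀ v ∈ (e : Sym2 V), g (Quot.out (e : Sym2 V)).1 = g v :=
      fun e he v hv => hK e he _ (Sym2.out_fst_mem _) v hv
    intro v
    refine ⟨?_, ?_⟩
    · rw [← hR v]
      congr 1
      ext e
      simp only [Finset.mem_filter, Finset.mem_univ, true_and, incidentEdges]
      constructor
      · rintro ⟨a, b⟩
        by_cases he : e ∈ C
        · exact ⟨he, a⟩
        · rw [if_neg he] at b
          exact absurd b.symm (Fin.castSucc_ne_last _)
      · rintro ⟨a, b⟩
        exact ⟨b, by rw [if_pos a, h0 e a v b]⟩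
    · intro e he
      simp only [Finset.mem_filter, Finset.mem_univ, true_and, incidentEdges] at he
      by_cases hc : e ∈ C
      · left; beta_reduce; rw [if_pos hc, h0 e hc v he]
      · right; beta_reduce; rw [if_neg hc]
  · intro f hf
    simp only [Finset.mem_filter, Finset.mem_univ, true_and] at hf ⊢
    funext e
    split_ifs with h
    · exact (key f hf e _ (Sym2.out_fst_mem _) h).symm
    · exact (not_not.1 h).symm
  · intro C hC
    ext e
    simp only [Finset.mem_filter, Finset.mem_univ, true_and]
    by_cases hc : e ∈ C
    · simp [hc, Fin.castSucc_ne_last]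
    · simp [hc]

theorem state_sum_eq {V : Type*} [Fintype V] [DecidableEq V]
    (G : SimpleGraph V) {m : ℕ} (x : Fin m → ℂ) :
    (∑ f : G.edgeSet → Fin (m + 1), ∏ v : V, localWeight G 0 x f v) =
    ∑ C ∈ Finset.univ.filter (fun C : Finset G.edgeSet => RegC G C),
      ∑ g : V → Fin m, if CompatC G C g then ∏ v, x (g v) else 0 := by
  have e1 : ∀ f : G.edgeSet → Fin (m + 1), ∏ v : V, localWeight G 0 x f v =
      ∑ g : V → Fin m, if (∀ v, condW G f v (g v)) then ∏ v, x (g v) else 0 := by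
    intro f
    simp_rw [localWeight_zero]
    rw [Finset.prod_univ_sum]
    simp only [Fintype.piFinset_univ]
    refine Finset.sum_congr rfl fun g _ => ?_
    split_ifs with h
    · exact Finset.prod_congr rfl fun v _ => if_pos (h v)
    · push Not at h
      obtain ⟨v, hv⟩ := h
      exact Finset.prod_eq_zero (Finset.mem_univ v) (if_neg hv)
  simp_rw [e1]
  rw [Finset.sum_comm, Finset.sum_comm]
  rw [Finset.sum_comm]
  conv_rhs => rw [Finset.sum_comm]
  refine Finset.sum_congr rfl fun g _ => ?_
  rw [← Finset.sum_filter, ← Finset.sum_filter, Finset.filter_filter, Finset.sum_const,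
    Finset.sum_const, card_cond]

theorem mem_lift {V : Type*} (G : SimpleGraph V) (C : Finset G.edgeSet) (x : Sym2 V) :
    (x ∈ (do let a ← C; pure (a : Sym2 V) : Finset (Sym2 V))) ↔
      ∃ e : G.edgeSet, e ∈ C ∧ (e : Sym2 V) = x := by
  simp only [Finset.bind_def, Finset.mem_sup, Finset.pure_def, Finset.mem_singleton]
  simp only [eq_comm]

theorem card_lift {V : Type*} [Fintype V] [DecidableEq V] (G : SimpleGraph V) (C : Finset G.edgeSet) (v : V) :
    (Finset.filter (fun e : Sym2 V => v ∈ e)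
      (do let a ← C; pure (a : Sym2 V) : Finset (Sym2 V))).card =
    (C.filter (fun e : G.edgeSet => v ∈ (e : Sym2 V))).card := by
  symm
  refine Finset.card_bij (fun e _ => (e : Sym2 V)) ?_ ?_ ?_
  · intro e he
    rw [Finset.mem_filter] at he ⊢
    exact ⟨(mem_lift G C _).2 ⟨e, he.1, rfl⟩, he.2⟩
  · intro a _ b _ h
    exact Subtype.ext h
  · intro x hx
    rw [Finset.mem_filter, mem_lift] at hx
    obtain ⟨⟨e, he, rfl⟩, hv⟩ := hx
    exact ⟨e, Finset.mem_filter.2 ⟨he, hv⟩, rfl⟩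

theorem cycleGraph_adj' {V : Type*} [Fintype V] [DecidableEq V]
    (G : SimpleGraph V) (C : Finset G.edgeSet) (u v : V) :
    (cycleGraph G C).Adj u v ↔ ∃ e : G.edgeSet, e ∈ C ∧ (e : Sym2 V) = s(u, v) := by
  unfold cycleGraph
  rw [SimpleGraph.fromEdgeSet_adj]
  have hm : s(u, v) ∈ (Finset.image (fun e : Sym2 V => e)
      (do let a ← C; pure (a : Sym2 V) : Finset (Sym2 V))) ↔
      ∃ e : G.edgeSet, e ∈ C ∧ (e : Sym2 V) = s(u, v) := by
    rw [Finset.image_id', mem_lift]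
  rw [Finset.mem_coe]
  constructor
  · rintro ⟨h, -⟩
    exact hm.1 h
  · rintro ⟨e, he, h⟩
    refine ⟨hm.2 ⟨e, he, h⟩, ?_⟩
    have := e.2
    rw [h, SimpleGraph.mem_edgeSet] at this
    exact this.ne

theorem compat_iff {V : Type*} [Fintype V] [DecidableEq V]
    (G : SimpleGraph V) {m : ℕ} (C : Finset G.edgeSet) (g : V → Fin m) :
    CompatC G C g ↔ ∀ u v, (cycleGraph G C).Adj u v → g u = g v := by
  constructor
  · intro h u v huv
    obtain ⟨e, he, h'⟩ := (cycleGraph_adj' G C u v).1 huv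
    exact h e he u (by rw [h']; simp) v (by rw [h']; simp)
  · intro h e he u hu v hv
    by_cases huv : u = v
    · rw [huv]
    · exact h u v ((cycleGraph_adj' G C u v).2 ⟨e, he, (Sym2.mem_and_mem_iff huv).1 ⟨hu, hv⟩⟩)

theorem reach_const {V : Type*} {α : Type*} (H : SimpleGraph V) (g : V → α)
    (h : ∀ u v, H.Adj u v → g u = g v) {u v : V} (huv : H.Reachable u v) : g u = g v := by
  obtain ⟨p⟩ := huv
  induction p with
  | nil => rfl
  | cons hd _ ih => exact (h _ _ hd).trans ih

theorem reg_card {V : Type*} [Fintype V] [DecidableEq V]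
    (G : SimpleGraph V) (C : Finset G.edgeSet) (h : RegC G C) : C.card = Fintype.card V := by
  have h1 : ∑ v : V, (C.filter (fun e : G.edgeSet => v ∈ (e : Sym2 V))).card
      = ∑ e ∈ C, (Finset.univ.filter (fun v : V => v ∈ ((e : G.edgeSet) : Sym2 V))).card := 
    Finset.sum_card_bipartiteAbove_eq_sum_card_bipartiteBelow
      (fun (v : V) (e : G.edgeSet) => v ∈ (e : Sym2 V))
  have h2 : ∀ e : G.edgeSet, e ∈ C → (Finset.univ.filter (fun v : V => v ∈ (e : Sym2 V))).card = 2 := by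
    rintro ⟨e, he⟩ -
    induction e using Sym2.ind with
    | _ a b =>
      have : a ≠ b := (show G.Adj a b from he).ne
      rw [← Finset.card_pair this]
      congr 1
      ext v
      simp
  rw [Finset.sum_congr rfl h2, Finset.sum_congr rfl (fun v _ => h v)] at h1
  simp at h1
  omega

theorem ham_iff {V : Type*} [Fintype V] [DecidableEq V]
    (G : SimpleGraph V) (n : ℕ) (hn : Fintype.card V = n) (h1 : 1 ≤ n) (C : Finset G.edgeSet) :
    (IsMultiCycle G C ∧ C.card = n ∧ (cycleGraph G C).Connected) ↔
      (RegC G C ∧ (cycleGraph G C).Connected) := by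
  constructor
  · rintro ⟨hM, hc, hC⟩
    refine ⟨fun v => (card_lift G C v).symm.trans (hM v ?_), hC⟩
    obtain ⟨e, he⟩ : C.Nonempty := Finset.card_pos.1 (by omega)
    have hnt : Nontrivial V := by
      obtain ⟨e, he'⟩ := e
      induction e using Sym2.ind with
      | _ a b => exact ⟨a, b, (show G.Adj a b from he').ne⟩
    obtain ⟨u, hu⟩ := hC.preconnected.exists_adj_of_nontrivial v
    obtain ⟨e, he, h⟩ := (cycleGraph_adj' G C v u).1 hu
    exact ⟨e, he, by rw [h]; simp⟩
  · rintro ⟨hR, hC⟩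
    exact ⟨fun v _ => (card_lift G C v).trans (hR v), (reg_card G C hR).trans hn, hC⟩

theorem sum_connected {V : Type*} [Fintype V] [DecidableEq V]
    (G : SimpleGraph V) {m : ℕ} (C : Finset G.edgeSet) (x : Fin m → ℂ)
    (hx : ∀ j, x j ^ Fintype.card V = 1) (hC : (cycleGraph G C).Connected) :
    (∑ g : V → Fin m, if CompatC G C g then ∏ v, x (g v) else 0) = m := by
  have hne : Nonempty V := hC.nonempty
  rw [← Finset.sum_filter]
  have : Finset.univ.filter (fun g : V → Fin m => CompatC G C g) =
      Finset.univ.image (fun i : Fin m => (fun _ : V => i)) := by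
    ext g
    simp only [Finset.mem_filter, Finset.mem_univ, true_and, Finset.mem_image]
    constructor
    · intro h
      rw [compat_iff] at h
      obtain ⟨v0⟩ := hne
      exact ⟨g v0, funext fun v => reach_const _ g h (hC.preconnected v0 v)⟩
    · rintro ⟨i, rfl⟩ e he u hu v hv
      rfl
  rw [this, Finset.sum_image]
  · simp [hx]
  · intro i _ j _ h
    obtain ⟨v0⟩ := hne
    exact congrFun h v0

theorem sum_disconnected {V : Type*} [Fintype V] [DecidableEq V]
    (G : SimpleGraph V) {m : ℕ} (C : Finset G.edgeSet) (x : Fin m → ℂ) (ζ : ℂ)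
    (s : Equiv.Perm (Fin m))
    (hx : ∀ j, x (s j) = ζ * x j) (hζ : IsPrimitiveRoot ζ (Fintype.card V)) (hne : Nonempty V)
    (hC : ¬ (cycleGraph G C).Connected) :
    (∑ g : V → Fin m, if CompatC G C g then ∏ v, x (g v) else 0) = 0 := by
  obtain ⟨a, b, hab⟩ : ∃ a b, ¬ (cycleGraph G C).Reachable a b := by
    by_contra! h
    exact hC ⟨h⟩
  set H := cycleGraph G C with hH
  let R : (V → Fin m) ≃ (V → Fin m) :=
    Equiv.piCongrRight (fun v => if H.Reachable a v then s else Equiv.refl _)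
  have hR : ∀ g v, R g v = if H.Reachable a v then s (g v) else g v := by
    intro g v
    simp only [R, Equiv.piCongrRight_apply, Pi.map_apply]
    split_ifs <;> rfl
  have hcomp : ∀ g, CompatC G C (R g) ↔ CompatC G C g := by
    intro g
    rw [compat_iff, compat_iff]
    refine forall_congr' fun u => forall_congr' fun v => forall_congr' fun huv => ?_
    rw [hR, hR]
    have hiff : H.Reachable a u ↔ H.Reachable a v :=
      ⟨fun h => h.trans huv.reachable, fun h => h.trans huv.symm.reachable⟩
    by_cases h : H.Reachable a u
    · rw [if_pos h, if_pos (hiff.1 h)]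
      exact s.injective.eq_iff
    · rw [if_neg h, if_neg (fun h' => h (hiff.2 h'))]
  set k := (Finset.univ.filter (fun v => H.Reachable a v)).card with hk
  have hprod : ∀ g, ∏ v, x (R g v) = ζ ^ k * ∏ v, x (g v) := by
    intro g
    have : ∀ v, x (R g v) = (if H.Reachable a v then ζ else 1) * x (g v) := by
      intro v
      rw [hR]
      split_ifs
      · exact hx _
      · simp
    simp_rw [this]
    rw [Finset.prod_mul_distrib, ← Finset.prod_filter, Finset.prod_const]
  have hk0 : k ≠ 0 := by
    apply Finset.card_ne_zero_of_mem (a := a)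
    simp
  have hkn : k < Fintype.card V := by
    apply Finset.card_lt_univ_of_notMem (x := b)
    simpa using hab
  have hne1 : ζ ^ k ≠ 1 := hζ.pow_ne_one_of_pos_of_lt hk0 hkn
  have heq := Equiv.sum_comp R (fun g : V → Fin m => if CompatC G C g then ∏ v, x (g v) else 0)
  simp only [hcomp, hprod] at heq
  have h2 : ∀ g : V → Fin m, (if CompatC G C g then ζ ^ k * ∏ v, x (g v) else 0) =
      ζ ^ k * (if CompatC G C g then ∏ v, x (g v) else 0) := by
    intro g; split_ifs <;> simp
  simp only [h2] at heq
  rw [← Finset.mul_sum] at heq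
  by_contra h0
  exact hne1 (mul_right_cancel₀ h0 (heq.trans (one_mul _).symm))

/-- Let `G` be a graph with `n ≥ 1` vertices.  With `r = n + 1` colors,
`x_j = exp(2πij/n)` for `j = 1, …, n` and `t = 0`, the state sum `Σ_f Π_v w_v(f)`
equals `n` times the number of Hamiltonian cycles of `G` (connected cycles with `n`
edges, i.e. connected spanning 2-regular subgraphs). -/
theorem state_sum_eq_card_hamiltonian_cycles
    {V : Type*} [Fintype V] [DecidableEq V] (G : SimpleGraph V)
    (n : ℕ) (hn : Fintype.card V = n) (h1 : 1 ≤ n) :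
    (∑ f : G.edgeSet → Fin (n + 1), ∏ v : V,
      localWeight G (0 : ℂ)
        (fun j : Fin n => Complex.exp (2 * Real.pi * Complex.I * ((j : ℕ) + 1) / n))
        f v) =
    (n : ℂ) *
      ((Finset.univ.filter (fun C : Finset G.edgeSet =>
        IsMultiCycle G C ∧ C.card = n ∧ (cycleGraph G C).Connected)).card : ℂ) := by
  have hn0 : n ≠ 0 := by omega
  have : NeZero n := ⟨hn0⟩
  set ζ : ℂ := Complex.exp (2 * Real.pi * Complex.I / n) with hζd
  have hζ : IsPrimitiveRoot ζ n := Complex.isPrimitiveRoot_exp n hn0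
  have hxe : (fun j : Fin n => Complex.exp (2 * Real.pi * Complex.I * ((j : ℕ) + 1) / n)) =
      fun j : Fin n => ζ ^ ((j : ℕ) + 1) := by
    funext j
    rw [hζd, ← Complex.exp_nat_mul]
    congr 1
    push_cast
    ring
  rw [hxe, state_sum_eq]
  have hne : Nonempty V := Fintype.card_pos_iff.1 (by omega)
  have hval : ∀ C : Finset G.edgeSet,
      (∑ g : V → Fin n, if CompatC G C g then ∏ v, ζ ^ ((g v : ℕ) + 1) else 0) =
      if (cycleGraph G C).Connected then (n : ℂ) else 0 := by
    intro C
    split_ifs with hC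
    · refine sum_connected G C (fun j : Fin n => ζ ^ ((j : ℕ) + 1)) ?_ hC
      intro j
      rw [hn, ← pow_mul, mul_comm, pow_mul, hζ.pow_eq_one, one_pow]
    · refine sum_disconnected G C (fun j : Fin n => ζ ^ ((j : ℕ) + 1)) ζ (Equiv.addRight 1)
        ?_ (by rw [hn]; exact hζ) hne hC
      intro j
      have h3 : ζ ^ (((j + 1 : Fin n) : ℕ)) = ζ ^ ((j : ℕ) + 1) := by
        rw [Fin.val_add, Fin.val_one', Nat.add_mod_mod, ← pow_mod_orderOf ζ ((j : ℕ) + 1),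
          ← hζ.eq_orderOf]
      simp only [Equiv.coe_addRight]
      rw [pow_succ, h3, mul_comm]
  rw [Finset.sum_congr rfl (fun C _ => hval C), ← Finset.sum_filter, Finset.filter_filter,
    Finset.sum_const, nsmul_eq_mul, mul_comm]
  congr 3
  ext C
  simp only [Finset.mem_filter, Finset.mem_univ, true_and]
  exact (ham_iff G n hn h1 C).symm
end

section
/- Let G be a finite simple graph, let r ≥ 2 be an integer, and let t, x_1, …, x_{r−1} be nonzero complex numbers. For f : E → Fin r, the product Π_{v ∈ V} w_v(f) is nonzero if and only if the set S of edges e with f(e) ≠ r is a cycle in G (i.e., every vertex incident to an edge of S is incident to exactly two edges of S) and f is constant on each connected component of S (each connected component is monochromatic in a color from {1, …, r−1}). -/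
open scoped Classical

theorem isMultiCycle_iff_aux {V : Type*} [Fintype V] [DecidableEq V]
    (G : SimpleGraph V) (C : Finset G.edgeSet) :
    IsMultiCycle G C ↔ ∀ v : V, (∃ e ∈ C, v ∈ (e : Sym2 V)) →
      (Finset.filter (fun e : G.edgeSet => v ∈ (e : Sym2 V)) C).card = 2 := by
  unfold IsMultiCycle
  refine forall_congr' fun v => imp_congr_right fun _ => ?_
  rw [← Finset.card_image_of_injective (Finset.filter (fun e : G.edgeSet => v ∈ (e : Sym2 V)) C)
    Subtype.val_injective]
  refine Eq.congr (congrArg Finset.card ?_) rfl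
  ext e
  simp only [Finset.bind_def, Finset.pure_def, Finset.mem_filter, Finset.mem_sup,
    Finset.mem_singleton, Finset.mem_image]
  constructor
  · rintro ⟨⟨a, ha, rfl⟩, h⟩
    exact ⟨a, ⟨ha, h⟩, rfl⟩
  · rintro ⟨a, ⟨ha, h⟩, rfl⟩
    exact ⟨⟨a, ha, rfl⟩, h⟩

theorem cycleGraph_adj_aux {V : Type*} [Fintype V] [DecidableEq V]
    (G : SimpleGraph V) (C : Finset G.edgeSet) {u v : V} (h : (cycleGraph G C).Adj u v) :
    ∃ d : G.edgeSet, d ∈ C ∧ (d : Sym2 V) = s(u, v) := by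
  simp only [cycleGraph, SimpleGraph.fromEdgeSet_adj, Finset.coe_image, Set.mem_image,
    Finset.mem_coe, Finset.bind_def, Finset.pure_def, Finset.mem_sup,
    Finset.mem_singleton] at h
  obtain ⟨⟨x, ⟨d, hd, rfl⟩, hx⟩, -⟩ := h
  exact ⟨d, hd, hx⟩

theorem localWeight_ne_zero_iff_aux {V : Type*} [Fintype V] [DecidableEq V]
    (G : SimpleGraph V) {m : ℕ} (t : ℂ) (x : Fin m → ℂ)
    (ht : t ≠ 0) (hx : ∀ i : Fin m, x i ≠ 0)
    (f : G.edgeSet → Fin (m + 1)) (v : V) :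
    localWeight G t x f v ≠ 0 ↔
      (∀ e : G.edgeSet, v ∈ (e : Sym2 V) → f e = Fin.last m) ∨
      ∃ i : Fin m, ((incidentEdges G v).filter (fun e => f e = i.castSucc)).card = 2 ∧
        (∀ e : G.edgeSet, v ∈ (e : Sym2 V) → f e = i.castSucc ∨ f e = Fin.last m) := by
  have hmem : ∀ e : G.edgeSet, e ∈ incidentEdges G v ↔ v ∈ (e : Sym2 V) := by
    intro e; simp [incidentEdges]
  unfold localWeight
  simp only [hmem]
  split_ifs with h
  · exact ⟨fun _ => Or.inl h, fun _ => ht⟩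
  · constructor
    · intro hs
      obtain ⟨i, -, hi⟩ := Finset.exists_ne_zero_of_sum_ne_zero hs
      right
      refine ⟨i, ?_⟩
      by_contra hc
      exact hi (if_neg hc)
    · rintro (h' | ⟨i, hi⟩)
      · exact absurd h' h
      · rw [Finset.sum_eq_single i]
        · rw [if_pos hi]; exact hx i
        · intro j _ hji
          apply if_neg
          rintro ⟨-, hj⟩
          apply h
          intro e he
          rcases hi.2 e he with h1 | h1
          · rcases hj e he with h2 | h2
            · exact absurd (Fin.castSucc_injective _ (h2.symm.trans h1)) hji
            · exact h2
          · exact h1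
        · simp

/-- For `r = m + 1 ≥ 2` colors and nonzero `t, x_1, …, x_{r-1}`, the product
`Π_v w_v(f)` is nonzero if and only if the set `S` of edges not colored with the last
color is a cycle in `G` and `f` is constant on each connected component of `S`. -/
theorem product_of_weights_ne_zero_iff
    {V : Type*} [Fintype V] [DecidableEq V] (G : SimpleGraph V)
    (m : ℕ) (hm : 1 ≤ m) (t : ℂ) (x : Fin m → ℂ)
    (ht : t ≠ 0) (hx : ∀ i : Fin m, x i ≠ 0)
    (f : G.edgeSet → Fin (m + 1)) :
    (∏ v : V, localWeight G t x f v) ≠ 0 ↔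
      (IsMultiCycle G (Finset.univ.filter (fun e : G.edgeSet => f e ≠ Fin.last m)) ∧
        ∀ e e' : G.edgeSet, f e ≠ Fin.last m → f e' ≠ Fin.last m →
          (∃ u v : V, u ∈ (e : Sym2 V) ∧ v ∈ (e' : Sym2 V) ∧
            (cycleGraph G
              (Finset.univ.filter (fun e : G.edgeSet => f e ≠ Fin.last m))).Reachable u v) →
          f e = f e') := by
  rw [Finset.prod_ne_zero_iff]
  simp only [Finset.mem_univ, true_implies, isMultiCycle_iff_aux,
    localWeight_ne_zero_iff_aux G t x ht hx f]
  constructor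
  · intro H
    have share : ∀ (v : V) (e e' : G.edgeSet), f e ≠ Fin.last m → f e' ≠ Fin.last m →
        v ∈ (e : Sym2 V) → v ∈ (e' : Sym2 V) → f e = f e' := by
      intro v e e' he he' hv hv'
      rcases H v with h | ⟨i, -, h⟩
      · exact absurd (h e hv) he
      · rw [(h e hv).resolve_right he, (h e' hv').resolve_right he']
    refine ⟨?_, ?_⟩
    · rintro v ⟨e, he, hv⟩
      simp only [Finset.mem_filter, Finset.mem_univ, true_and] at he
      rcases H v with h | ⟨i, hc, h⟩
      · exact absurd (h e hv) he
      · rw [← hc]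
        congr 1
        ext e'
        simp only [incidentEdges, Finset.mem_filter, Finset.mem_univ, true_and]
        constructor
        · rintro ⟨h1, h2⟩
          exact ⟨h2, (h e' h2).resolve_right h1⟩
        · rintro ⟨h1, h2⟩
          exact ⟨by rw [h2]; exact Fin.castSucc_ne_last i, h1⟩
    · rintro e e' he he' ⟨u, v, hu, hv, ⟨p⟩⟩
      induction p generalizing e with
      | nil => exact share _ e e' he he' hu hv
      | cons hadj p ih =>
        obtain ⟨d, hd, hde⟩ := cycleGraph_adj_aux G _ hadj
        simp only [Finset.mem_filter, Finset.mem_univ, true_and] at hd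
        exact (share _ e d he hd hu (by rw [hde]; simp)).trans
          (ih d hd (by rw [hde]; simp) hv)
  · rintro ⟨H1, H2⟩ v
    by_cases h : ∀ e : G.edgeSet, v ∈ (e : Sym2 V) → f e = Fin.last m
    · exact Or.inl h
    · right
      push Not at h
      obtain ⟨e, hv, he⟩ := h
      obtain ⟨i, hi⟩ := Fin.exists_castSucc_eq.2 he
      have key : ∀ e' : G.edgeSet, v ∈ (e' : Sym2 V) → f e' ≠ Fin.last m →
          f e' = i.castSucc := fun e' hv' he' =>
        (H2 e' e he' he ⟨v, v, hv', hv, SimpleGraph.Reachable.refl _⟩).trans hi.symm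
      refine ⟨i, ?_, fun e' hv' => or_iff_not_imp_right.2 (key e' hv')⟩
      rw [← H1 v ⟨e, by simpa using he, hv⟩]
      congr 1
      ext e'
      simp only [incidentEdges, Finset.mem_filter, Finset.mem_univ, true_and]
      constructor
      · rintro ⟨h1, h2⟩
        exact ⟨by rw [h2]; exact Fin.castSucc_ne_last i, h1⟩
      · rintro ⟨h1, h2⟩
        exact ⟨h2, key e' h2 h1⟩
end
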